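/- Let B be a finite set and k ≥ 2 an integer. Define the quiver Q̊ᵏ with vertex set {v_0, …, v_{k−1}}, and arrows b_{i,j} : v_i → v_j for each b ∈ B and 0 ≤ i < j < k, together with arrows e_{i,j} : v_i → v_j for all i, j ∈ {0, …, k−1}. Let r' be the smallest congruence on Paths Q̊ᵏ such that: (i) any two parallel paths whose arrows all lie in the set A_e = {e_{i,j} | i, j} are r'-related (in particular e_{j,l}·e_{i,j} ~ e_{i,l} and e_{i,i} ~ id_{v_i}); and (ii) for each b ∈ B and 0 ≤ i < j < k, any two parallel paths whose arrows all lie in the set A_{b,i,j} = {e_{0,i} (omitted if i = 0), b_{i,j}, e_{j,k−1} (omitted if j = k−1), b_{0,k−1}} are r'-related (in particular the path e_{0,i} then b_{i,j} then e_{j,k−1} is related to b_{0,k−1}). Then the quotient category (Paths Q̊ᵏ)/r' is equivalent to the free category Paths Q on the quiver Q with one vertex and loop set B (equivalently, to SingleObj of the free monoid on B). -/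

import Mathlib

open CategoryTheory

universe u

/-- The vertices `v_0, …, v_{k-1}` of the quiver `Q̊ᵏ`. -/
structure RingedVertex (B : Type u) (k : ℕ) where
  idx : Fin k

/-- The quiver `Q̊ᵏ`: arrows `b_{i,j} : v_i ⟶ v_j` for `b ∈ B` and `i < j`
(encoded as `Sum.inl (⟨h⟩, b)`), and arrows `e_{i,j} : v_i ⟶ v_j` for all `i, j`
(encoded as `Sum.inr ()`). -/
instance (B : Type u) (k : ℕ) : Quiver (RingedVertex B k) :=
  ⟨fun i j => (PLift (i.idx < j.idx) × B) ⊕ PUnit⟩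

/-- A path lies in a subquiver given by a set of arrows `A` if all of its arrows do. -/
def Quiver.Path.InArrows {V : Type*} [Quiver V] (A : ∀ i j : V, Set (i ⟶ j)) :
    ∀ {u v : V}, Quiver.Path u v → Prop
  | _, _, .nil => True
  | _, _, .cons p f => p.InArrows A ∧ f ∈ A _ _

/-- The set `A_e` of all the arrows `e_{i,j}`. -/
def Ae (B : Type u) (k : ℕ) : ∀ i j : RingedVertex B k, Set (i ⟶ j) :=
  fun _ _ => Set.range Sum.inr

/-- The set `A_{b,i,j} = {e_{0,i} (omitted if i = 0), b_{i,j}, e_{j,k-1} (omitted if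
j = k-1), b_{0,k-1}}`. -/
def Abij (B : Type u) (k : ℕ) (hk : 2 ≤ k) (b : B) (i j : Fin k) :
    ∀ u v : RingedVertex B k, Set (u ⟶ v) := fun u v f =>
  (u.idx = ⟨0, by omega⟩ ∧ v.idx = i ∧ i ≠ ⟨0, by omega⟩ ∧ f ∈ Set.range Sum.inr) ∨
  (u.idx = i ∧ v.idx = j ∧ ∃ h : u.idx < v.idx, f = Sum.inl (PLift.up h, b)) ∨
  (u.idx = j ∧ v.idx = ⟨k - 1, by omega⟩ ∧ j ≠ ⟨k - 1, by omega⟩ ∧ f ∈ Set.range Sum.inr) ∨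
  (u.idx = ⟨0, by omega⟩ ∧ v.idx = ⟨k - 1, by omega⟩ ∧ ∃ h : u.idx < v.idx,
    f = Sum.inl (PLift.up h, b))

/-- The generating relations for the congruence `r'`. -/
def genRel (B : Type u) (k : ℕ) (hk : 2 ≤ k) : HomRel (Paths (RingedVertex B k)) :=
  fun _u _v p q =>
    (Quiver.Path.InArrows (Ae B k) p ∧ Quiver.Path.InArrows (Ae B k) q) ∨
    (∃ (b : B) (i j : Fin k), i < j ∧
      Quiver.Path.InArrows (Abij B k hk b i j) p ∧ Quiver.Path.InArrows (Abij B k hk b i j) q)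

namespace RingedAux

/-- The arrow `e_{u,v}`. -/
def eArr {B : Type u} {k : ℕ} (x y : RingedVertex B k) : x ⟶ y := Sum.inr PUnit.unit

/-- The arrow `b_{u,v}`. -/
def bArr {B : Type u} {k : ℕ} (b : B) (x y : RingedVertex B k) (h : x.idx < y.idx) : x ⟶ y :=
  Sum.inl (PLift.up h, b)

/-- The label of an arrow, as a path. -/
def label {B : Type u} {k : ℕ} {x y : RingedVertex B k} :
    (x ⟶ y) → Quiver.Path (Quiver.SingleObj.star B) (Quiver.SingleObj.star B)
  | Sum.inl c => Quiver.Path.cons Quiver.Path.nil c.2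
  | Sum.inr _ => Quiver.Path.nil

/-- Reading off the labels of a path. -/
def Fm {B : Type u} {k : ℕ} {x : RingedVertex B k} : ∀ {y : RingedVertex B k},
    Quiver.Path x y → Quiver.Path (Quiver.SingleObj.star B) (Quiver.SingleObj.star B)
  | _, .nil => .nil
  | _, .cons p f => (Fm p).comp (label f)

theorem F_cons {B : Type u} {k : ℕ} {x y z : RingedVertex B k} (p : Quiver.Path x y)
    (f : y ⟶ z) : Fm (p.cons f) = (Fm p).comp (label f) := rfl

theorem Fm_comp {B : Type u} {k : ℕ} {x y z : RingedVertex B k} (p : Quiver.Path x y)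
    (q : Quiver.Path y z) : Fm (p.comp q) = (Fm p).comp (Fm q) := by
  induction q with
  | nil => rfl
  | cons q f ih => rw [Quiver.Path.comp_cons, F_cons, ih, F_cons, Quiver.Path.comp_assoc]

/-- The functor reading off the labels. -/
def F (B : Type u) (k : ℕ) : Paths (RingedVertex B k) ⥤ Paths (Quiver.SingleObj B) where
  obj _ := Quiver.SingleObj.star B
  map p := Fm p
  map_id _ := rfl
  map_comp p q := Fm_comp p q

theorem ia_nil {V : Type*} [Quiver V] (A : ∀ i j : V, Set (i ⟶ j)) {x : V} :
    (Quiver.Path.nil : Quiver.Path x x).InArrows A := by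
  rw [Quiver.Path.InArrows]
  trivial

theorem ia_cons {V : Type*} [Quiver V] (A : ∀ i j : V, Set (i ⟶ j)) {x y z : V}
    (p : Quiver.Path x y) (f : y ⟶ z) :
    (p.cons f).InArrows A ↔ (p.InArrows A ∧ f ∈ A _ _) := by
  rw [Quiver.Path.InArrows]

theorem ia1 {V : Type*} [Quiver V] {A : ∀ i j : V, Set (i ⟶ j)} {x y : V}
    {f : x ⟶ y} (h : f ∈ A _ _) : f.toPath.InArrows A :=
  (ia_cons _ _ _).2 ⟨ia_nil _, h⟩

theorem ia2 {V : Type*} [Quiver V] {A : ∀ i j : V, Set (i ⟶ j)} {x y z : V}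
    {f : x ⟶ y} {g : y ⟶ z} (h : f ∈ A _ _) (h' : g ∈ A _ _) : (f.toPath.cons g).InArrows A :=
  (ia_cons _ _ _).2 ⟨ia1 h, h'⟩

theorem ia3 {V : Type*} [Quiver V] {A : ∀ i j : V, Set (i ⟶ j)} {x y z w : V}
    {f : x ⟶ y} {g : y ⟶ z} {l : z ⟶ w} (h : f ∈ A _ _) (hg : g ∈ A _ _) (hl : l ∈ A _ _) :
    ((f.toPath.cons g).cons l).InArrows A :=
  (ia_cons _ _ _).2 ⟨ia2 h hg, hl⟩

/-- The power `b^n`. -/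
def bp {B : Type u} (b : B) : ℕ → Quiver.Path (Quiver.SingleObj.star B) (Quiver.SingleObj.star B)
  | 0 => Quiver.Path.nil
  | n + 1 => Quiver.Path.cons (bp b n) b

theorem F_Ae (B : Type u) (k : ℕ) {x y : RingedVertex B k} (p : Quiver.Path x y)
    (hp : p.InArrows (Ae B k)) : Fm p = Quiver.Path.nil := by
  induction p with
  | nil => rfl
  | cons p f ih =>
    obtain ⟨h1, ⟨c, rfl⟩⟩ := (ia_cons _ _ _).1 hp
    rw [F_cons, ih h1]
    rfl

/-- The potential. -/
def pot {B : Type u} {k : ℕ} (i : Fin k) (x : RingedVertex B k) : ℕ := if x.idx ≤ i then 0 else 1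

theorem F_Abij (B : Type u) (k : ℕ) (hk : 2 ≤ k) (b : B) (i j : Fin k) (hij : i < j)
    {x y : RingedVertex B k} (p : Quiver.Path x y)
    (hp : p.InArrows (Abij B k hk b i j)) :
    pot i x ≤ pot i y ∧ Fm p = bp b (pot i y - pot i x) := by
  induction p with
  | nil => exact ⟨le_rfl, by rw [Nat.sub_self]; rfl⟩
  | @cons y z p f ih =>
    obtain ⟨h1, h2⟩ := (ia_cons _ _ _).1 hp
    obtain ⟨h3, h4⟩ := ih h1
    have key : (pot i y = pot i z ∧ label f = Quiver.Path.nil) ∨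
        (pot i z = pot i y + 1 ∧ label f = Quiver.Path.cons Quiver.Path.nil b) := by
      have hi0 : (⟨0, by omega⟩ : Fin k) ≤ i := Fin.mk_le_of_le_val (Nat.zero_le _)
      have hjk : ¬ ((⟨k - 1, by omega⟩ : Fin k) ≤ i) := by
        rw [not_le, Fin.lt_def]
        have := j.2
        have := Fin.lt_def.1 hij
        simp only
        omega
      rcases h2 with ⟨a, c, -, d, rfl⟩ | ⟨a, c, d, rfl⟩ | ⟨a, c, -, d, rfl⟩ | ⟨a, c, d, rfl⟩
      · left
        refine ⟨?_, rfl⟩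
        simp [pot, a, c, hi0]
      · right
        refine ⟨?_, rfl⟩
        simp [pot, a, c, hij]
      · left
        refine ⟨?_, rfl⟩
        simp only [pot, a, c, if_neg hjk, if_neg (not_le.2 hij)]
      · right
        refine ⟨?_, rfl⟩
        simp only [pot, a, c, if_neg hjk, if_pos hi0]
    rw [F_cons, h4]
    rcases key with ⟨k1, k2⟩ | ⟨k1, k2⟩
    · rw [k2, ← k1]
      exact ⟨h3, rfl⟩
    · rw [k2, k1]
      refine ⟨by omega, ?_⟩
      rw [Nat.sub_add_comm h3]
      rfl

theorem F_gen (B : Type u) (k : ℕ) (hk : 2 ≤ k) (x y : Paths (RingedVertex B k)) (p q : x ⟶ y)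
    (h : genRel B k hk p q) : (F B k).map p = (F B k).map q := by
  rcases h with ⟨h1, h2⟩ | ⟨b, i, j, hij, h1, h2⟩
  · exact (F_Ae B k p h1).trans (F_Ae B k q h2).symm
  · exact (F_Abij B k hk b i j hij p h1).2.trans (F_Abij B k hk b i j hij q h2).2.symm

section

universe w

variable {B : Type u} {k : ℕ} (hk : 2 ≤ k) (r : HomRel.{0, max u w} (Paths (RingedVertex B k)))

/-- The object of the quotient. -/
def ob (x : RingedVertex B k) : CategoryTheory.Quotient r := ⟨x⟩

/-- The class of a path. -/
def mk {x y : RingedVertex B k} (p : Quiver.Path x y) : ob r x ⟶ ob r y :=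
  (CategoryTheory.Quotient.functor r).map (X := x) (Y := y) p

theorem mk_nil (x : RingedVertex B k) : mk r (.nil : Quiver.Path x x) = 𝟙 _ := rfl

theorem mk_cons {x y z : RingedVertex B k} (p : Quiver.Path x y) (f : y ⟶ z) :
    mk r (p.cons f) = mk r p ≫ mk r f.toPath := rfl

/-- The class of `e`. -/
def E (x y : RingedVertex B k) : ob r x ⟶ ob r y := mk r (eArr x y).toPath

/-- The class of `b`. -/
def Bm (b : B) (x y : RingedVertex B k) (h : x.idx < y.idx) : ob r x ⟶ ob r y :=
  mk r (bArr b x y h).toPath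

/-- First vertex. -/
def v0 : RingedVertex B k := ⟨⟨0, by omega⟩⟩

/-- Last vertex. -/
def vl : RingedVertex B k := ⟨⟨k - 1, by omega⟩⟩

theorem v0_lt_vl : (v0 hk : RingedVertex B k).idx < (vl hk : RingedVertex B k).idx := by
  rw [Fin.lt_def]
  simp only [v0, vl]
  omega

/-- The map back. -/
def G {s : Quiver.SingleObj B} : ∀ {t : Quiver.SingleObj B}, Quiver.Path s t →
    (ob r (v0 hk) ⟶ ob r (v0 hk))
  | _, .nil => 𝟙 _
  | _, .cons p b => G p ≫ Bm r b (v0 hk) (vl hk) (v0_lt_vl hk) ≫ E r (vl hk) (v0 hk)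

theorem G_comp {s t t' : Quiver.SingleObj B} (p : Quiver.Path s t) (q : Quiver.Path t t') :
    G hk r (p.comp q) = G hk r p ≫ G hk r q := by
  induction q with
  | nil => exact (Category.comp_id _).symm
  | cons q b ih =>
    rw [Quiver.Path.comp_cons, G, G, ih, Category.assoc]

variable (hgen : ∀ (x y : Paths (RingedVertex B k)) (p q : x ⟶ y), genRel B k hk p q → r p q)

include hgen

theorem mk_sound {x y : RingedVertex B k} {p q : Quiver.Path x y}
    (h : genRel B k hk (X := x) (Y := y) p q) : mk r p = mk r q :=
  CategoryTheory.Quotient.sound r (hgen _ _ _ _ h)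

theorem E_self (x : RingedVertex B k) : E r x x = 𝟙 _ :=
  mk_sound hk r hgen (Or.inl ⟨ia1 ⟨_, rfl⟩, ia_nil _⟩)

theorem E_comp (x y z : RingedVertex B k) : E r x y ≫ E r y z = E r x z :=
  mk_sound hk r hgen (p := (eArr x y).toPath.cons (eArr y z))
    (Or.inl ⟨ia2 ⟨_, rfl⟩ ⟨_, rfl⟩, ia1 ⟨_, rfl⟩⟩)

theorem E_B_E (b : B) (x y : RingedVertex B k) (h : x.idx < y.idx) :
    E r (v0 hk) x ≫ Bm r b x y h ≫ E r y (vl hk) =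
      Bm r b (v0 hk) (vl hk) (v0_lt_vl hk) := by
  have hb : bArr b (v0 hk) (vl hk) (v0_lt_vl hk) ∈ Abij B k hk b x.idx y.idx (v0 hk) (vl hk) :=
    Or.inr (Or.inr (Or.inr ⟨rfl, rfl, v0_lt_vl hk, rfl⟩))
  have hxy : bArr b x y h ∈ Abij B k hk b x.idx y.idx x y :=
    Or.inr (Or.inl ⟨rfl, rfl, h, rfl⟩)
  have h0 : x ≠ v0 hk → eArr (v0 hk) x ∈ Abij B k hk b x.idx y.idx (v0 hk) x := fun hx =>
    Or.inl ⟨rfl, rfl, fun h => hx (by cases x; simp only at h; subst h; rfl), ⟨_, rfl⟩⟩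
  have h1 : y ≠ vl hk → eArr y (vl hk) ∈ Abij B k hk b x.idx y.idx y (vl hk) := fun hx =>
    Or.inr (Or.inr (Or.inl
      ⟨rfl, rfl, fun h => hx (by cases y; simp only at h; subst h; rfl), ⟨_, rfl⟩⟩))
  by_cases hx : x = v0 hk
  · by_cases hy : y = vl hk
    · subst hx hy
      rw [E_self hk r hgen, E_self hk r hgen, Category.id_comp, Category.comp_id]
    · subst hx
      rw [E_self hk r hgen, Category.id_comp]
      exact mk_sound hk r hgen (Or.inr ⟨b, _, _, h, ia2 hxy (h1 hy), ia1 hb⟩)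
  · by_cases hy : y = vl hk
    · subst hy
      rw [E_self hk r hgen, Category.comp_id]
      exact mk_sound hk r hgen (Or.inr ⟨b, _, _, h, ia2 (h0 hx) hxy, ia1 hb⟩)
    · rw [← Category.assoc]
      exact mk_sound hk r hgen (Or.inr ⟨b, _, _, h, ia3 (h0 hx) hxy (h1 hy), ia1 hb⟩)

theorem arrow_eq {x y : RingedVertex B k} (f : x ⟶ y) :
    mk r f.toPath = E r x (v0 hk) ≫ G hk r (label f) ≫ E r (v0 hk) y := by
  rcases f with ⟨⟨h⟩, b⟩ | ⟨⟩
  · have hG : G hk r (label (Sum.inl (PLift.up h, b) : x ⟶ y)) =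
        Bm r b (v0 hk) (vl hk) (v0_lt_vl hk) ≫ E r (vl hk) (v0 hk) :=
      Category.id_comp _
    rw [hG, ← E_B_E hk r hgen b x y h]
    simp only [Category.assoc]
    rw [E_comp hk r hgen, E_comp hk r hgen, E_self hk r hgen, Category.comp_id,
      ← Category.assoc, E_comp hk r hgen, E_self hk r hgen, Category.id_comp]
    rfl
  · have hG : G hk r (label (Sum.inr PUnit.unit : x ⟶ y)) = 𝟙 _ := rfl
    rw [hG, Category.id_comp, E_comp hk r hgen]
    rfl

theorem path_eq {x y : RingedVertex B k} (p : Quiver.Path x y) :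
    mk r p = E r x (v0 hk) ≫ G hk r (Fm p) ≫ E r (v0 hk) y := by
  induction p with
  | nil =>
    rw [Fm, G, Category.id_comp, E_comp hk r hgen, E_self hk r hgen, mk_nil]
  | @cons y z p f ih =>
    have e3 : E r (v0 hk) y ≫ E r y (v0 hk) = 𝟙 _ := by
      rw [E_comp hk r hgen, E_self hk r hgen]
    rw [mk_cons, F_cons, G_comp, ih, arrow_eq hk r hgen f]
    simp only [Category.assoc]
    rw [reassoc_of% e3]

end

/-- A lift of a path of loops to the ringed quiver. -/
def lft {B : Type u} {k : ℕ} (hk : 2 ≤ k) {s : Quiver.SingleObj B} :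
    ∀ {t : Quiver.SingleObj B}, Quiver.Path s t →
      Quiver.Path (v0 hk : RingedVertex B k) (v0 hk)
  | _, .nil => .nil
  | _, .cons p b =>
    ((lft hk p).cons (bArr b (v0 hk) (vl hk) (v0_lt_vl hk))).cons (eArr (vl hk) (v0 hk))

theorem F_lft {B : Type u} {k : ℕ} (hk : 2 ≤ k) {t : Quiver.SingleObj B}
    (p : Quiver.Path (Quiver.SingleObj.star B) t) :
    Fm (lft hk p) = p := by
  induction p with
  | nil => rfl
  | @cons y z p b ih =>
    have : Fm (lft hk (p.cons b)) = Quiver.Path.cons (Fm (lft hk p)) b := rfl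
    rw [this, ih]

theorem F_surj {B : Type u} {k : ℕ} (hk : 2 ≤ k) (x y : RingedVertex B k)
    (p : Quiver.Path (Quiver.SingleObj.star B) (Quiver.SingleObj.star B)) :
    ∃ q : Quiver.Path x y, Fm q = p := by
  refine ⟨((eArr x (v0 hk)).toPath.comp (lft hk p)).cons (eArr (v0 hk) y), ?_⟩
  have h1 : Fm (((eArr x (v0 hk)).toPath.comp (lft hk p)).cons (eArr (v0 hk) y)) =
      Fm ((eArr x (v0 hk)).toPath.comp (lft hk p)) := rfl
  have h3 : Fm ((eArr x (v0 hk)).toPath) = .nil := rfl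
  rw [h1, Fm_comp, h3, F_lft, Quiver.Path.nil_comp]

end RingedAux

/-- the quotient of the free category on `Q̊ᵏ` by the smallest congruence
relating parallel paths supported on `A_e` and parallel paths supported on each `A_{b,i,j}`
is equivalent to the free category on the one-vertex quiver with loop set `B`. -/
theorem quotient_ringed_equiv_free
    (B : Type u) [Fintype B] (k : ℕ) (hk : 2 ≤ k)
    (r' : HomRel (Paths (RingedVertex B k)))
    (hcong : Congruence r')
    (hgen : ∀ (u v : Paths (RingedVertex B k)) (p q : u ⟶ v), genRel B k hk p q → r' p q)
    (hmin : ∀ s : HomRel (Paths (RingedVertex B k)), Congruence s →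
      (∀ (u v : Paths (RingedVertex B k)) (p q : u ⟶ v), genRel B k hk p q → s p q) →
      ∀ (u v : Paths (RingedVertex B k)) (p q : u ⟶ v), r' p q → s p q) :
    Nonempty (CategoryTheory.Quotient r' ≌ Paths (Quiver.SingleObj B)) := by
  have H : ∀ (x y : Paths (RingedVertex B k)) (p q : x ⟶ y), r' p q →
      (RingedAux.F B k).map p = (RingedAux.F B k).map q :=
    hmin (RingedAux.F B k).homRel inferInstance (RingedAux.F_gen B k hk)
  let L := CategoryTheory.Quotient.lift r' (RingedAux.F B k) H
  have hfull : L.Full := ⟨by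
    rintro ⟨x⟩ ⟨y⟩ f
    obtain ⟨q, hq⟩ := RingedAux.F_surj hk x y f
    exact ⟨RingedAux.mk r' q, hq⟩⟩
  have hfaith : L.Faithful := ⟨by
    rintro ⟨x⟩ ⟨y⟩ ⟨p⟩ ⟨q⟩ h
    have h' : RingedAux.Fm p = RingedAux.Fm q := h
    have e1 := RingedAux.path_eq hk r' hgen p
    have e2 := RingedAux.path_eq hk r' hgen q
    rw [h'] at e1
    exact e1.trans e2.symm⟩
  have hess : L.EssSurj := ⟨fun Y =>
    ⟨RingedAux.ob r' (RingedAux.v0 hk), ⟨Iso.refl _⟩⟩⟩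
  have : L.IsEquivalence := {}
  exact ⟨L.asEquivalence⟩
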